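/- arXiv:2002.12267 — 9 statements merged into one kernel-verified Lean document; each statement's English description precedes it below -/
import Mathlib

section
/- Let X be a complete lattice and O : X × X → X a quasi-overlap function. Then the function I_O(x,y) = sup{t ∈ X | O(x,t) ≤ y} is well defined, non-decreasing in its second variable, non-increasing (antitone) in its first variable, and satisfies I_O(0,0) = I_O(0,1) = I_O(1,1) = 1 and I_O(1,0) = 0. -/
open Set

/-- A quasi-overlap function on a bounded lattice `X`:
(OL1) commutative; (OL2) `O x y = ⊥` iff `x = ⊥` or `y = ⊥`;
(OL3) `O x y = ⊤` iff `x = ⊤` and `y = ⊤`; (OL4) non-decreasing in each variable. -/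
structure IsQuasiOverlap {X : Type*} [Lattice X] [BoundedOrder X] (O : X → X → X) : Prop where
  comm : ∀ x y, O x y = O y x
  bot_iff : ∀ x y, O x y = ⊥ ↔ x = ⊥ ∨ y = ⊥
  top_iff : ∀ x y, O x y = ⊤ ↔ x = ⊤ ∧ y = ⊤
  mono_left : ∀ ⦃x₁ x₂⦄ (y : X), x₁ ≤ x₂ → O x₁ y ≤ O x₂ y
  mono_right : ∀ (x : X) ⦃y₁ y₂⦄, y₁ ≤ y₂ → O x y₁ ≤ O x y₂

/-- The implication induced by a quasi-overlap `O` on a complete lattice: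
`I_O x y = sup {t | O x t ≤ y}`. -/
def oImpl {X : Type*} [CompleteLattice X] (O : X → X → X) (x y : X) : X :=
  sSup {t | O x t ≤ y}

section OImpl

variable {X : Type*} [CompleteLattice X] {O : X → X → X} {x y t : X}

theorem le_oImpl (h : O x t ≤ y) : t ≤ oImpl O x y :=
  le_sSup h

theorem oImpl_eq_top_of_apply_top_le (h : O x ⊤ ≤ y) : oImpl O x y = ⊤ :=
  top_le_iff.mp (le_oImpl h)

theorem oImpl_top_right (O : X → X → X) (x : X) : oImpl O x ⊤ = ⊤ :=
  oImpl_eq_top_of_apply_top_le le_top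

theorem oImpl_eq_bot_iff : oImpl O x y = ⊥ ↔ ∀ t, O x t ≤ y → t = ⊥ :=
  sSup_eq_bot

theorem monotone_oImpl_right (O : X → X → X) (x : X) : Monotone fun y => oImpl O x y :=
  fun _ _ hy => sSup_le_sSup fun _ ht => le_trans ht hy

theorem antitone_oImpl_left (hO : ∀ t, Monotone fun x => O x t) (y : X) :
    Antitone fun x => oImpl O x y :=
  fun _ _ hx => sSup_le_sSup fun t ht => le_trans (hO t hx) ht

theorem oImpl_basic_properties_general (hmono : ∀ t, Monotone fun x => O x t)
    (hbot : O ⊥ ⊤ = ⊥) (htop : ∀ t, O ⊤ t = ⊥ → t = ⊥) :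
    (∀ x : X, Monotone (fun y => oImpl O x y)) ∧
    (∀ y : X, Antitone (fun x => oImpl O x y)) ∧
    oImpl O (⊥ : X) ⊥ = ⊤ ∧ oImpl O (⊥ : X) ⊤ = ⊤ ∧
    oImpl O (⊤ : X) ⊤ = ⊤ ∧ oImpl O (⊤ : X) ⊥ = ⊥ :=
  ⟨monotone_oImpl_right O, antitone_oImpl_left hmono,
    oImpl_eq_top_of_apply_top_le hbot.le, oImpl_top_right O ⊥, oImpl_top_right O ⊤,
    oImpl_eq_bot_iff.mpr fun t ht => htop t (le_bot_iff.mp ht)⟩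

end OImpl

namespace IsQuasiOverlap

variable {X : Type*} [Lattice X] [BoundedOrder X] {O : X → X → X}

theorem apply_bot_left (hO : IsQuasiOverlap O) (y : X) : O ⊥ y = ⊥ :=
  (hO.bot_iff ⊥ y).mpr (Or.inl rfl)

theorem eq_bot_of_apply_top_left_eq_bot (hO : IsQuasiOverlap O) {t : X} (h : O ⊤ t = ⊥) :
    t = ⊥ := by
  rcases (hO.bot_iff ⊤ t).mp h with top_eq_bot | t_eq_bot
  · exact eq_bot_of_bot_eq_top top_eq_bot.symm t
  · exact t_eq_bot

end IsQuasiOverlap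

theorem oImpl_basic_properties {X : Type*} [CompleteLattice X]
    (O : X → X → X) (hO : IsQuasiOverlap O) :
    (∀ x : X, Monotone (fun y => oImpl O x y)) ∧
    (∀ y : X, Antitone (fun x => oImpl O x y)) ∧
    oImpl O (⊥ : X) ⊥ = ⊤ ∧ oImpl O (⊥ : X) ⊤ = ⊤ ∧
    oImpl O (⊤ : X) ⊤ = ⊤ ∧ oImpl O (⊤ : X) ⊥ = ⊥ :=
  oImpl_basic_properties_general (fun t _ _ hx => hO.mono_left t hx) (hO.apply_bot_left ⊤)
    fun _ => hO.eq_bot_of_apply_top_left_eq_bot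
end

section
/- Let X be a complete lattice and O : X × X → X a quasi-overlap function such that I_O(x,y) = max{t ∈ X | O(x,t) ≤ y} for all x,y ∈ X (i.e., O(x, I_O(x,y)) ≤ y). Then for every x ∈ X the section t ↦ O(x,t) preserves suprema of directed sets; in particular O(x, sup_{j∈J} z_j) = sup_{j∈J} O(x, z_j) for every non-decreasing net (z_j)_{j∈J} in X. -/
open Set

theorem galoisConnection_oImpl {X : Type*} [CompleteLattice X] {O : X → X → X} {x : X}
    (hmono : Monotone (O x)) (hmax : ∀ y, O x (oImpl O x y) ≤ y) :
    GaloisConnection (O x) (oImpl O x) :=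
  fun _ y => ⟨fun h => le_sSup h, fun h => (hmono h).trans (hmax y)⟩

theorem quasiOverlap_scottContinuous_of_max_general {X : Type*} [CompleteLattice X]
    {O : X → X → X} {x : X} (hmono : Monotone (O x)) (hmax : ∀ y, O x (oImpl O x y) ≤ y) :
    (∀ D : Set X, O x (sSup D) = sSup (O x '' D)) ∧
    (∀ {ι : Sort*} (z : ι → X), O x (⨆ i, z i) = ⨆ i, O x (z i)) := by
  have gc := galoisConnection_oImpl hmono hmax
  exact ⟨fun _ => gc.l_sSup.trans sSup_image.symm, fun _ => gc.l_iSup⟩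

theorem quasiOverlap_scottContinuous_of_max {X : Type*} [CompleteLattice X]
    (O : X → X → X) (hO : IsQuasiOverlap O)
    (hmax : ∀ x y : X, O x (oImpl O x y) ≤ y) :
    (∀ x : X, ∀ D : Set X, D.Nonempty → DirectedOn (· ≤ ·) D →
        O x (sSup D) = sSup ((fun t => O x t) '' D)) ∧
    (∀ x : X, ∀ {J : Type} [SemilatticeSup J] [Nonempty J] (z : J → X), Monotone z →
        O x (⨆ j, z j) = ⨆ j, O x (z j)) := by
  have h (x : X) := quasiOverlap_scottContinuous_of_max_general (hO.mono_right x) (hmax x)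
  exact ⟨fun x D _ _ => (h x).1 D, fun x _ _ _ z _ => (h x).2 z⟩
end

section
/- Let X be a complete lattice that is densely ordered and O : X × X → X a residuated quasi-overlap function (i.e., the pair (O, I_O) satisfies the residuation principle). Then I_O satisfies the neutrality property (NP): I_O(1,y) = y for all y ∈ X, if and only if 1 is a neutral element of O: O(1,y) = y for all y ∈ X. -/
open Set

theorem galoisConnection_u_eq_self_iff_l_eq_self {α : Type*} [PartialOrder α] {l u : α → α}
    (gc : GaloisConnection l u) : (∀ a, u a = a) ↔ ∀ a, l a = a :=
  ⟨fun h _ => gc.l_unique GaloisConnection.id h, fun h _ => gc.u_unique GaloisConnection.id h⟩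

theorem oImpl_neutrality_iff_general {X : Type*} [CompleteLattice X] (O : X → X → X) (e : X)
    (hres : ∀ y z : X, O e z ≤ y ↔ z ≤ oImpl O e y) :
    (∀ y : X, oImpl O e y = y) ↔ (∀ y : X, O e y = y) :=
  galoisConnection_u_eq_self_iff_l_eq_self fun z y => hres y z

theorem oImpl_neutrality_iff {X : Type*} [CompleteLattice X] [DenselyOrdered X]
    (O : X → X → X) (hO : IsQuasiOverlap O)
    (hres : ∀ x y z : X, O x z ≤ y ↔ z ≤ oImpl O x y) :
    (∀ y : X, oImpl O ⊤ y = y) ↔ (∀ y : X, O ⊤ y = y) :=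
  oImpl_neutrality_iff_general O ⊤ (hres ⊤)
end

section
/- Let X be a complete lattice that is densely ordered and O : X × X → X a residuated quasi-overlap function (i.e., the pair (O, I_O) satisfies the residuation principle). Then I_O satisfies the ordering property (OP): for all x,y ∈ X, x ≤ y ⇔ I_O(x,y) = 1, if and only if O has neutral element 1: O(x,1) = x for all x ∈ X. -/
open Set

/- By residuation `I x y = ⊤` says exactly that `O x ⊤ ≤ y`, so the ordering property asserts that
`x` and `O x ⊤` have the same upper bounds, that is, that they are equal. -/
theorem oImpl_ordering_iff_neutral_general {α β : Type*} [PartialOrder α] [PartialOrder β]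
    [OrderTop β] {O : α → β → α} {I : α → α → β} (hres : ∀ x, GaloisConnection (O x) (I x)) :
    (∀ x y, x ≤ y ↔ I x y = ⊤) ↔ ∀ x, O x ⊤ = x := by
  simp only [(hres _).u_eq_top]
  exact forall_congr' fun x =>
    ⟨fun h => (eq_of_forall_ge_iff h).symm, fun h y => by rw [h]⟩

theorem oImpl_ordering_iff_neutral {X : Type*} [CompleteLattice X] [DenselyOrdered X]
    (O : X → X → X) (hO : IsQuasiOverlap O)
    (hres : ∀ x y z : X, O x z ≤ y ↔ z ≤ oImpl O x y) :
    (∀ x y : X, x ≤ y ↔ oImpl O x y = ⊤) ↔ (∀ x : X, O x ⊤ = x) :=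
  oImpl_ordering_iff_neutral_general fun x z y => hres x y z
end

section
/- Let X be a complete lattice that is densely ordered and O : X × X → X a residuated quasi-overlap function (i.e., the pair (O, I_O) satisfies the residuation principle). If I_O satisfies the exchange principle (EP): I_O(x, I_O(y,z)) = I_O(y, I_O(x,z)) for all x,y,z ∈ X, and for all x,y,z ∈ X the elements O(x, O(y,z)) and O(y, O(x,z)) are comparable, then O is associative. -/
open Set

theorem leftCommutative_of_galoisConnection {ι X : Type*} [PartialOrder X] {l u : ι → X → X}
    (gc : ∀ i, GaloisConnection (l i) (u i)) [LeftCommutative u] : LeftCommutative l where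
  left_comm i j _ :=
    (gc i).l_comm_of_u_comm (gc i) (gc j) (gc j) (LeftCommutative.left_comm j i)

theorem associative_of_leftCommutative {X : Type*} (O : X → X → X) [Std.Commutative O]
    [LeftCommutative O] : Std.Associative O where
  assoc x y z := calc
    O (O x y) z = O z (O x y) := Std.Commutative.comm _ _
    _ = O x (O z y) := LeftCommutative.left_comm z x y
    _ = O x (O y z) := congrArg (O x) (Std.Commutative.comm z y)

theorem quasiOverlap_assoc_of_exchange_general {X : Type*} [PartialOrder X] {O I : X → X → X}
    (hcomm : ∀ x y, O x y = O y x) (hres : ∀ x, GaloisConnection (O x) (I x))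
    (hEP : ∀ x y z, I x (I y z) = I y (I x z)) (x y z : X) :
    O (O x y) z = O x (O y z) :=
  have : Std.Commutative O := ⟨hcomm⟩
  have : LeftCommutative I := ⟨hEP⟩
  have : LeftCommutative O := leftCommutative_of_galoisConnection hres
  (associative_of_leftCommutative O).assoc x y z

theorem quasiOverlap_assoc_of_exchange {X : Type*} [CompleteLattice X] [DenselyOrdered X]
    (O : X → X → X) (hO : IsQuasiOverlap O)
    (hres : ∀ x y z : X, O x z ≤ y ↔ z ≤ oImpl O x y)
    (hEP : ∀ x y z : X, oImpl O x (oImpl O y z) = oImpl O y (oImpl O x z))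
    (hcomp : ∀ x y z : X, O x (O y z) ≤ O y (O x z) ∨ O y (O x z) ≤ O x (O y z)) :
    ∀ x y z : X, O (O x y) z = O x (O y z) :=
  quasiOverlap_assoc_of_exchange_general hO.comm (fun x z y ↦ hres x y z) hEP
end

section
/- Let X be a complete lattice that is densely ordered and O : X × X → X a residuated quasi-overlap function (i.e., the pair (O, I_O) satisfies the residuation principle). If O is associative, then I_O satisfies the exchange principle (EP): I_O(x, I_O(y,z)) = I_O(y, I_O(x,z)) for all x,y,z ∈ X. -/
open Set

theorem oImpl_exchange_of_assoc_general {ι X : Type*} [PartialOrder X] {O I : ι → X → X}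
    [LeftCommutative O] (gc : ∀ x, GaloisConnection (O x) (I x)) (x y : ι) (z : X) :
    I x (I y z) = I y (I x z) :=
  (gc y).u_comm_of_l_comm (gc y) (gc x) (gc x) (LeftCommutative.left_comm y x)

theorem oImpl_exchange_of_assoc {X : Type*} [CompleteLattice X] [DenselyOrdered X]
    (O : X → X → X) (hO : IsQuasiOverlap O)
    (hres : ∀ x y z : X, O x z ≤ y ↔ z ≤ oImpl O x y)
    (hassoc : ∀ x y z : X, O (O x y) z = O x (O y z)) :
    ∀ x y z : X, oImpl O x (oImpl O y z) = oImpl O y (oImpl O x z) :=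
  have : Std.Commutative O := ⟨hO.comm⟩
  have : Std.Associative O := ⟨hassoc⟩
  oImpl_exchange_of_assoc_general fun x t y => hres x y t
end

section
/- Let X be a complete lattice, O : X × X → X a quasi-overlap function, and ρ : X → X an order automorphism (a bijection with x ≤ y ⇔ ρ(x) ≤ ρ(y)). Then the conjugate O^ρ defined by O^ρ(x,y) = ρ⁻¹(O(ρ(x), ρ(y))) is also a quasi-overlap function. Moreover, if for every x the section t ↦ O(x,t) preserves suprema of directed sets, then for every x the section t ↦ O^ρ(x,t) preserves suprema of directed sets. -/
open Set

/-- The conjugate of `O` by an order automorphism `ρ`: `O^ρ x y = ρ⁻¹ (O (ρ x) (ρ y))`. -/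
def oConj {X : Type*} [CompleteLattice X] (O : X → X → X) (ρ : X ≃o X) (x y : X) : X :=
  ρ.symm (O (ρ x) (ρ y))

theorem scottContinuous_orderIso {X Y : Type*} [Preorder X] [Preorder Y] (ρ : X ≃o Y) :
    ScottContinuous ρ :=
  fun _ _ _ _ h => ρ.isLUB_image'.mpr h

section Conjugate

variable {X Y : Type*} [Lattice X] [BoundedOrder X] [Lattice Y] [BoundedOrder Y] {O : Y → Y → Y}

theorem IsQuasiOverlap.conj (hO : IsQuasiOverlap O) (ρ : X ≃o Y) :
    IsQuasiOverlap fun x y => ρ.symm (O (ρ x) (ρ y)) where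
  comm x y := congrArg ρ.symm (hO.comm (ρ x) (ρ y))
  bot_iff x y := by simp only [map_eq_bot_iff, hO.bot_iff]
  top_iff x y := by simp only [map_eq_top_iff, hO.top_iff]
  mono_left _ _ y h := ρ.symm.monotone (hO.mono_left (ρ y) (ρ.monotone h))
  mono_right x _ _ h := ρ.symm.monotone (hO.mono_right (ρ x) (ρ.monotone h))

/-- Preservation of directed suprema is expressed by `ScottContinuous`, which refers only to those
least upper bounds that exist. -/
theorem oConj_isQuasiOverlap_general (hO : IsQuasiOverlap O) (ρ : X ≃o Y) :
    IsQuasiOverlap (fun x y => ρ.symm (O (ρ x) (ρ y))) ∧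
      ((∀ y, ScottContinuous (O y)) →
        ∀ x, ScottContinuous fun t => ρ.symm (O (ρ x) (ρ t))) :=
  ⟨hO.conj ρ, fun hcont x =>
    ((scottContinuous_orderIso ρ).comp (hcont (ρ x))).comp (scottContinuous_orderIso ρ.symm)⟩

end Conjugate

theorem oConj_isQuasiOverlap {X : Type*} [CompleteLattice X]
    (O : X → X → X) (hO : IsQuasiOverlap O) (ρ : X ≃o X) :
    IsQuasiOverlap (oConj O ρ) ∧
    ((∀ x : X, ∀ D : Set X, D.Nonempty → DirectedOn (· ≤ ·) D →
        O x (sSup D) = sSup ((fun t => O x t) '' D)) →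
      ∀ x : X, ∀ D : Set X, D.Nonempty → DirectedOn (· ≤ ·) D →
        oConj O ρ x (sSup D) = sSup ((fun t => oConj O ρ x t) '' D)) := by
  simpa only [scottContinuous_iff_map_sSup] using! oConj_isQuasiOverlap_general hO ρ
end

section
/- Let X be a complete lattice, O : X × X → X a quasi-overlap function, and ρ : X → X an order automorphism. Then the conjugate of the induced implication coincides with the implication induced by the conjugate: for all x,y ∈ X, ρ⁻¹(I_O(ρ(x), ρ(y))) = I_{O^ρ}(x,y), where O^ρ(x,y) = ρ⁻¹(O(ρ(x), ρ(y))) and I_{O^ρ}(x,y) = sup{z ∈ X | O^ρ(x,z) ≤ y}. -/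
open Set

theorem oImpl_conj_eq_conj_oImpl_general {X Y : Type*} [CompleteLattice X] [CompleteLattice Y]
    (O : X → X → X) (ρ : Y ≃o X) (x y : Y) :
    ρ.symm (oImpl O (ρ x) (ρ y)) = oImpl (fun u v => ρ.symm (O (ρ u) (ρ v))) x y :=
  calc
    ρ.symm (sSup {t | O (ρ x) t ≤ ρ y}) = sSup {t | O (ρ x) (ρ t) ≤ ρ y} :=
      ρ.symm.map_sSup_eq_sSup_symm_preimage _
    _ = sSup {t | ρ.symm (O (ρ x) (ρ t)) ≤ y} := by
      simp only [ρ.symm_apply_le]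

theorem oImpl_conj_eq_conj_oImpl {X : Type*} [CompleteLattice X]
    (O : X → X → X) (hO : IsQuasiOverlap O) (ρ : X ≃o X) :
    ∀ x y : X, ρ.symm (oImpl O (ρ x) (ρ y)) = oImpl (oConj O ρ) x y :=
  oImpl_conj_eq_conj_oImpl_general O ρ
end

section
/- Let X be a complete lattice that is densely ordered and O : X × X → X a residuated quasi-overlap function (the pair (O, I_O) satisfies the residuation principle). For each z ∈ X, the map c_z : X → X defined by c_z(x) = I_O(I_O(x,z), z) is a closure operator on X: it is monotone (x ≤ y implies c_z(x) ≤ c_z(y)), inflationary (x ≤ c_z(x) for all x), and idempotent (c_z(c_z(x)) = c_z(x) for all x). -/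
open Set

section Residuation

variable {X Y : Type*} [LE Y] {O : X → X → Y} {I : X → Y → X}

theorem le_residual_comm [LE X] (hcomm : ∀ x y, O x y = O y x)
    (hres : ∀ x y z, O x z ≤ y ↔ z ≤ I x y) {x y : X} {z : Y} :
    x ≤ I y z ↔ y ≤ I x z := by
  rw [← hres, hcomm, hres]

theorem galoisConnection_residual [Preorder X] (hcomm : ∀ x y, O x y = O y x)
    (hres : ∀ x y z, O x z ≤ y ↔ z ≤ I x y) (z : Y) :
    GaloisConnection (fun x => OrderDual.toDual (I x z)) (fun y => I (OrderDual.ofDual y) z) :=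
  fun _ _ => le_residual_comm hcomm hres

theorem oImpl_double_is_closure_general [PartialOrder X] (hcomm : ∀ x y, O x y = O y x)
    (hres : ∀ x y z, O x z ≤ y ↔ z ≤ I x y) (z : Y) :
    Monotone (fun x => I (I x z) z) ∧
      (∀ x, x ≤ I (I x z) z) ∧
      (∀ x, I (I (I (I x z) z) z) z = I (I x z) z) :=
  let c : ClosureOperator X := (galoisConnection_residual hcomm hres z).closureOperator
  ⟨c.monotone, c.le_closure, c.idempotent⟩

end Residuation

theorem oImpl_double_is_closure {X : Type*} [CompleteLattice X] [DenselyOrdered X]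
    (O : X → X → X) (hO : IsQuasiOverlap O)
    (hres : ∀ x y z : X, O x z ≤ y ↔ z ≤ oImpl O x y) :
    ∀ z : X,
      Monotone (fun x => oImpl O (oImpl O x z) z) ∧
      (∀ x : X, x ≤ oImpl O (oImpl O x z) z) ∧
      (∀ x : X, oImpl O (oImpl O (oImpl O (oImpl O x z) z) z) z
          = oImpl O (oImpl O x z) z) :=
  oImpl_double_is_closure_general hO.comm hres
end
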